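/- The transfer matrices commute for different values of the spectral parameter: for all z, w ∈ ℂ (at generic parameter values where all theta denominators are nonzero), 𝒯(z) ∘ 𝒯(w) = 𝒯(w) ∘ 𝒯(z) as operators on functions ψ: ℂ^N → W[0]. -/

import Mathlib

/-!
The transfer matrices commute because `L` satisfies the dynamical exchange relation `RLL = LLR`
and the trace over the auxiliary space removes `R` by conjugation.

* Theta functions. The product `θ(x+y)θ(x-y)` is a `2 × 2` minor in functions of `x` and `y`
  (`theta_add_mul_theta_sub`), so Weierstrass's three-term identity is a Plücker relation
  (`theta_three_term`). Since the theta series converges only for `0 < im τ` and its `tsum` is `0`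
  otherwise, the identity holds for every `τ`.
* Dynamical Yang-Baxter equation (`dybe`). Weight conservation splits it into matrix entries
  between permutations of a triple of indices; each entry follows from one or two three-term
  identities.
* Exchange relation (`rll`). By induction on the number of tensor factors of `W`, peeling off the
  last one: that factor contributes one Yang-Baxter move, while the operators on the other factors
  pass through the `R`-matrix of the last factor by linearity and symmetry of the shifts
  (`rOp_LOp_comm`).
* Trace. For basis vectors `f`, `g` of `W`, let `A` and `B` be the kernels from `g` to `f` of the
  two products of Lax entries, as matrices on `ℂ^N ⊗ ℂ^N`. The exchange relation is
  `R(z-w, λ - γ wt f) A = B R(z-w, λ)` (`Rm_kerA`). If `f` has weight zero, i.e. every index occurs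
  `ℓ` times, the shift is by a constant vector and `R` depends only on differences of the `λ_a`, so
  both factors `R` agree. `R` is invertible by unitarity (`Rm_inverse`) and commutes with the
  diagonal matrix of the values of `ψ`, hence the traces of `A` and `B` against that matrix agree
  (`trace_kerA`). The diagonal entries `L_{ii}` preserve the weight (`Lent_diag_eq_zero`), so `f`
  and `g` of different weights contribute nothing.

The operators are handled by their action on coordinates (`rOp`, `LOp`) rather than as matrices:
the dynamical shift of `λ` then becomes an ordinary dependence on a bound index.
-/

noncomputable section

open Complex BigOperators

namespace Ruijsenaars

/-- Jacobi's first theta function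
`θ(z) = -∑_{j∈ℤ} exp(πi(j+1/2)²τ + 2πi(j+1/2)(z+1/2))`. -/
def theta (τ z : ℂ) : ℂ :=
  - ∑' j : ℤ, Complex.exp (Real.pi * Complex.I * ((j : ℂ) + 1 / 2) ^ 2 * τ +
      2 * Real.pi * Complex.I * ((j : ℂ) + 1 / 2) * (z + 1 / 2))

/-- `α(z,w) = θ(z)θ(w+γ)/(θ(z-γ)θ(w))`. -/
def alpha (τ γ z w : ℂ) : ℂ :=
  theta τ z * theta τ (w + γ) / (theta τ (z - γ) * theta τ w)

/-- `β(z,w) = -θ(z+w)θ(γ)/(θ(z-γ)θ(w))`. -/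
def beta (τ γ z w : ℂ) : ℂ :=
  - (theta τ (z + w) * theta τ γ / (theta τ (z - γ) * theta τ w))

/-- The elliptic dynamical R-matrix `R(z,λ)` on `ℂ^N ⊗ ℂ^N`,
`R(z,λ) = ∑_i e_{ii}⊗e_{ii} + ∑_{i≠j} α(z,λ_i-λ_j) e_{ii}⊗e_{jj}
        + ∑_{i≠j} β(z,λ_i-λ_j) e_{ij}⊗e_{ji}`,
written as a matrix on the standard basis of `ℂ^N ⊗ ℂ^N`: the entry at row `(i,j)`,
column `(k,l)` is the coefficient `R_{ik,jl}(z,λ)` of `e_{ik} ⊗ e_{jl}`. -/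
def Rm (τ γ : ℂ) {N : ℕ} (z : ℂ) (lam : Fin N → ℂ) :
    Matrix (Fin N × Fin N) (Fin N × Fin N) ℂ := fun p q =>
  if p = q then (if p.1 = p.2 then 1 else alpha τ γ z (lam p.1 - lam p.2))
  else if p.1 = q.2 ∧ p.2 = q.1 then beta τ γ z (lam p.1 - lam p.2) else 0

/-- The shift `λ ↦ λ - γ ω_j` by the `j`-th standard basis vector. -/
def shift1 (γ : ℂ) {N : ℕ} (lam : Fin N → ℂ) (j : Fin N) : Fin N → ℂ :=
  fun i => lam i - if i = j then γ else 0

/-- The weight of the basis vector `e_{f 1} ⊗ ⋯ ⊗ e_{f n}` of `W = (ℂ^N)^{⊗n}`: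
`wtc f a` is the number of occurrences of the index `a` in `f`. -/
def wtc {n N : ℕ} (f : Fin n → Fin N) (a : Fin N) : ℕ :=
  (Finset.univ.filter (fun j => f j = a)).card

/-- `R^{(0k)}(z, λ - γ ∑_{j>k} h^{(j)})` acting on `ℂ^N ⊗ W`, `W = (ℂ^N)^{⊗n}`;
it acts as `R(z, λ - γ∑_{j>k} ω_{i_j})` on the factors `0` and `k`. -/
def R0k (τ γ : ℂ) {N n : ℕ} (z : ℂ) (lam : Fin N → ℂ) (k : Fin n) :
    Matrix (Fin N × (Fin n → Fin N)) (Fin N × (Fin n → Fin N)) ℂ := fun p q =>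
  if ∀ j, j ≠ k → p.2 j = q.2 j then
    Rm τ γ z
      (fun i => lam i - γ * (((Finset.univ.filter (fun j => k < j ∧ q.2 j = i)).card : ℕ) : ℂ))
      (p.1, p.2 k) (q.1, q.2 k)
  else 0

/-- `L(z,λ) = R^{(01)}(z, λ-γ∑_{j≥2}h^{(j)}) R^{(02)}(z-γ, ·) ⋯ R^{(0n)}(z-γ(n-1), λ)`
on `ℂ^N ⊗ W`. -/
def Lop (τ γ : ℂ) {N : ℕ} (n : ℕ) (z : ℂ) (lam : Fin N → ℂ) :
    Matrix (Fin N × (Fin n → Fin N)) (Fin N × (Fin n → Fin N)) ℂ :=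
  ((List.finRange n).map (fun k => R0k τ γ (z - γ * (k.1 : ℂ)) lam k)).prod

/-- The matrix elements `L_{ij}(z,λ) ∈ End(W)`, defined by
`L(z,λ)(e_j⊗w) = ∑_i e_i ⊗ L_{ij}(z,λ)w`. -/
def Lent (τ γ : ℂ) {N : ℕ} (n : ℕ) (i j : Fin N) (z : ℂ) (lam : Fin N → ℂ) :
    Matrix (Fin n → Fin N) (Fin n → Fin N) ℂ := fun f g => Lop τ γ n z lam (i, f) (j, g)

/-- The Lax operator entries `ℒ_{ij}(z)` acting on `W`-valued functions of `λ`: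
`(ℒ_{ij}(z)ψ)(λ) = L_{ij}(z,λ) ψ(λ-γω_j)`. -/
def Lax (τ γ : ℂ) {N : ℕ} (n : ℕ) (i j : Fin N) (z : ℂ)
    (ψ : (Fin N → ℂ) → (Fin n → Fin N) → ℂ) : (Fin N → ℂ) → (Fin n → Fin N) → ℂ :=
  fun lam f => ∑ g, Lent τ γ n i j z lam f g * ψ (shift1 γ lam j) g

/-- The transfer matrix `𝒯(z) = ∑_{i=1}^N ℒ_{ii}(z)`. -/
def Transfer (τ γ : ℂ) {N : ℕ} (n : ℕ) (z : ℂ)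
    (ψ : (Fin N → ℂ) → (Fin n → Fin N) → ℂ) : (Fin N → ℂ) → (Fin n → Fin N) → ℂ :=
  fun lam f => ∑ i, Lax τ γ n i i z ψ lam f

/-! ### Theta functions and Weierstrass's identity -/

theorem theta_neg (τ z : ℂ) : theta τ (-z) = -theta τ z := by
  unfold theta
  rw [neg_inj, ← (Equiv.subLeft (-1 : ℤ)).tsum_eq, ← tsum_neg]
  refine tsum_congr fun j => ?_
  have h : Complex.exp (-(2 * Real.pi * Complex.I * ((j : ℂ) + 1 / 2))) = -1 := by
    rw [show -(2 * Real.pi * Complex.I * ((j : ℂ) + 1 / 2))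
      = Real.pi * Complex.I + ((-j - 1 : ℤ) : ℂ) * (2 * Real.pi * Complex.I) by push_cast; ring,
      Complex.exp_add, Complex.exp_int_mul_two_pi_mul_I, Complex.exp_pi_mul_I, mul_one]
  rw [neg_eq_neg_one_mul (Complex.exp _), ← h, ← Complex.exp_add]
  congr 1
  simp only [Equiv.subLeft_apply]
  push_cast
  ring

/-- The general term of the theta series. -/
def thetaTerm (τ z : ℂ) (j : ℤ) : ℂ :=
  Complex.exp (Real.pi * Complex.I * ((j : ℂ) + 1 / 2) ^ 2 * τ +
      2 * Real.pi * Complex.I * ((j : ℂ) + 1 / 2) * (z + 1 / 2))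

/-- The Gaussian weight `q^{m²/2} e^{2πimx}`, whose sums over even and odd `m` are
theta functions of modulus `2τ`. -/
def gaussTerm (τ x : ℂ) (m : ℤ) : ℂ :=
  Complex.exp (Real.pi * Complex.I * (m : ℂ) ^ 2 / 2 * τ + 2 * Real.pi * Complex.I * m * x)

/-- The sum of `gaussTerm` over even indices. -/
def thetaEven (τ x : ℂ) : ℂ := ∑' m : ℤ, gaussTerm τ x (2 * m)

/-- The sum of `gaussTerm` over odd indices. -/
def thetaOdd (τ x : ℂ) : ℂ := ∑' m : ℤ, gaussTerm τ x (2 * m + 1)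

theorem thetaTerm_eq (τ z : ℂ) (j : ℤ) : thetaTerm τ z j =
    Complex.exp (Real.pi * Complex.I * (τ / 4 + z + 1 / 2)) *
      jacobiTheta₂_term j (z + 1 / 2 + τ / 2) τ := by
  rw [thetaTerm, jacobiTheta₂_term, ← Complex.exp_add]
  congr 1
  ring

theorem summable_thetaTerm_iff (τ z : ℂ) : Summable (thetaTerm τ z) ↔ 0 < τ.im := by
  rw [funext (thetaTerm_eq τ z), summable_mul_left_iff (Complex.exp_ne_zero _),
    summable_jacobiTheta₂_term_iff]

theorem summable_gaussTerm_even {τ : ℂ} (hτ : 0 < τ.im) (x : ℂ) :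
    Summable fun m : ℤ => gaussTerm τ x (2 * m) := by
  have h : 0 < (2 * τ).im := by simpa using hτ
  refine ((summable_jacobiTheta₂_term_iff (2 * x) _).2 h).congr fun m => ?_
  rw [gaussTerm, jacobiTheta₂_term]
  congr 1
  push_cast
  ring

theorem summable_gaussTerm_odd {τ : ℂ} (hτ : 0 < τ.im) (x : ℂ) :
    Summable fun m : ℤ => gaussTerm τ x (2 * m + 1) := by
  have h : 0 < (2 * τ).im := by simpa using hτ
  refine (((summable_jacobiTheta₂_term_iff (2 * x + τ) _).2 h).mul_left
    (Complex.exp (Real.pi * Complex.I * (τ / 2 + 2 * x)))).congr fun m => ?_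
  rw [gaussTerm, jacobiTheta₂_term, ← Complex.exp_add]
  congr 1
  push_cast
  ring

/-- The pairs `(j, k)` with `j + k` odd and with `j + k` even, parametrised by half the
sum and half the difference of the half-integers `j + 1/2` and `k + 1/2`. -/
def parityEquiv : (ℤ × ℤ) ⊕ (ℤ × ℤ) ≃ ℤ × ℤ where
  toFun := Sum.elim (fun p => (p.1 + p.2, p.1 - p.2 - 1)) (fun p => (p.1 + p.2, p.1 - p.2))
  invFun p := if (p.1 + p.2) % 2 = 0 then Sum.inr ((p.1 + p.2) / 2, (p.1 - p.2) / 2)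
    else Sum.inl ((p.1 + p.2 + 1) / 2, (p.1 - p.2 - 1) / 2)
  left_inv := by
    rintro (⟨a, b⟩ | ⟨a, b⟩)
    · have : ¬ (a + b + (a - b - 1)) % 2 = 0 := by omega
      simp only [Sum.elim_inl, this, if_false, Sum.inl.injEq, Prod.mk.injEq]
      omega
    · have : (a + b + (a - b)) % 2 = 0 := by omega
      simp only [Sum.elim_inr, this, if_true, Sum.inr.injEq, Prod.mk.injEq]
      omega
  right_inv := by
    rintro ⟨j, k⟩
    by_cases h : (j + k) % 2 = 0
    · simp only [h, if_true, Sum.elim_inr, Prod.mk.injEq]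
      omega
    · simp only [h, if_false, Sum.elim_inl, Prod.mk.injEq]
      omega

/-- The product `θ(x+y)θ(x-y)` is a `2 × 2` determinant in functions of `x` and `y`. -/
theorem theta_add_mul_theta_sub {τ : ℂ} (hτ : 0 < τ.im) (x y : ℂ) :
    theta τ (x + y) * theta τ (x - y) =
      thetaEven τ x * thetaOdd τ y - thetaOdd τ x * thetaEven τ y := by
  have key (p : (ℤ × ℤ) ⊕ (ℤ × ℤ)) :
      thetaTerm τ (x + y) (parityEquiv p).1 * thetaTerm τ (x - y) (parityEquiv p).2 =
      Sum.elim (fun p : ℤ × ℤ => gaussTerm τ x (2 * p.1) * gaussTerm τ y (2 * p.2 + 1))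
        (fun p => -(gaussTerm τ x (2 * p.1 + 1) * gaussTerm τ y (2 * p.2))) p := by
    rcases p with ⟨a, b⟩ | ⟨a, b⟩
    · simp only [parityEquiv, Equiv.coe_fn_mk, Sum.elim_inl, thetaTerm, gaussTerm,
        ← Complex.exp_add]
      conv_rhs => rw [← mul_one (Complex.exp _), ← Complex.exp_int_mul_two_pi_mul_I a,
        ← Complex.exp_add]
      congr 1
      push_cast
      ring
    · simp only [parityEquiv, Equiv.coe_fn_mk, Sum.elim_inr, thetaTerm, gaussTerm,
        ← Complex.exp_add]
      have h : Complex.exp (Real.pi * Complex.I + (a : ℂ) * (2 * Real.pi * Complex.I)) = -1 := by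
        rw [Complex.exp_add, Complex.exp_int_mul_two_pi_mul_I, Complex.exp_pi_mul_I, mul_one]
      rw [neg_eq_neg_one_mul, ← h, ← Complex.exp_add]
      congr 1
      push_cast
      ring
  have hl := (summable_thetaTerm_iff τ (x + y)).2 hτ
  have hr := (summable_thetaTerm_iff τ (x - y)).2 hτ
  have h₁ : HasSum (fun p : ℤ × ℤ => thetaTerm τ (x + y) p.1 * thetaTerm τ (x - y) p.2)
      (theta τ (x + y) * theta τ (x - y)) := by
    have := (summable_mul_of_summable_norm hl.norm hr.norm).hasSum
    rwa [← tsum_mul_tsum_of_summable_norm hl.norm hr.norm, ← neg_mul_neg] at this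
  have hprod {f g : ℤ → ℂ} (hf : Summable f) (hg : Summable g) :
      HasSum (fun p : ℤ × ℤ => f p.1 * g p.2) ((∑' m, f m) * ∑' m, g m) := by
    rw [tsum_mul_tsum_of_summable_norm hf.norm hg.norm]
    exact (summable_mul_of_summable_norm hf.norm hg.norm).hasSum
  have h₂ := hprod (summable_gaussTerm_even hτ x) (summable_gaussTerm_odd hτ y)
  have h₃ := (hprod (summable_gaussTerm_odd hτ x) (summable_gaussTerm_even hτ y)).neg
  have h₄ := (parityEquiv.hasSum_iff).2 h₁
  rw [show _ ∘ _ = _ from funext key] at h₄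
  rw [sub_eq_add_neg (_ * _)]
  refine h₄.unique (HasSum.sum ?_ ?_)
  · rw [Sum.elim_comp_inl]
    exact h₂
  · rw [Sum.elim_comp_inr]
    exact h₃

/-- Weierstrass's three-term identity. By `theta_add_mul_theta_sub` it is the Plücker relation
for the `2 × 2` minors of a `2 × 4` matrix. The arguments are free up to equality so that
the identity can be instantiated in any normal form. -/
theorem theta_three_term (τ a b c d : ℂ) {p₁ p₂ p₃ p₄ q₁ q₂ q₃ q₄ r₁ r₂ r₃ r₄ : ℂ}
    (hp₁ : p₁ = a + b := by ring) (hp₂ : p₂ = a - b := by ring)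
    (hp₃ : p₃ = c + d := by ring) (hp₄ : p₄ = c - d := by ring)
    (hq₁ : q₁ = a + c := by ring) (hq₂ : q₂ = a - c := by ring)
    (hq₃ : q₃ = b + d := by ring) (hq₄ : q₄ = b - d := by ring)
    (hr₁ : r₁ = a + d := by ring) (hr₂ : r₂ = a - d := by ring)
    (hr₃ : r₃ = b + c := by ring) (hr₄ : r₄ = b - c := by ring) :
    theta τ p₁ * theta τ p₂ * (theta τ p₃ * theta τ p₄)
      - theta τ q₁ * theta τ q₂ * (theta τ q₃ * theta τ q₄)
      + theta τ r₁ * theta τ r₂ * (theta τ r₃ * theta τ r₄) = 0 := by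
  by_cases hτ : 0 < τ.im
  · subst_vars
    simp only [theta_add_mul_theta_sub hτ]
    ring
    -- otherwise the theta series diverges, so its `tsum` is `0`
  · have h (z : ℂ) : theta τ z = 0 :=
      neg_eq_zero.2 (tsum_eq_zero_of_not_summable ((summable_thetaTerm_iff τ z).not.2 hτ))
    simp [h]

/-! ### Matrix entries of the dynamical Yang-Baxter equation -/

/-- The theta denominators of `R(u,·)`, `R(v,·)` and `R(u+v,·)` do not vanish. -/
def SpectralGeneric (τ γ u v : ℂ) : Prop :=
  theta τ (u - γ) ≠ 0 ∧ theta τ (v - γ) ≠ 0 ∧ theta τ (u + v - γ) ≠ 0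

/-!
In the names below `dybe_r_s` is the matrix entry of the dynamical Yang-Baxter equation in row `r`
and column `s`, where `abc` stands for the basis vector `e_a ⊗ e_b ⊗ e_c` with `a`, `b`, `c`
distinct. The variables are `x = λ_a - λ_b` and `y = λ_b - λ_c`. Each nontrivial entry is a
multiple of a three-term identity `h`, or a combination of two of them.
-/

theorem dybe_abc_acb {τ γ u v x y : ℂ} (hx : theta τ x ≠ 0) (hy : theta τ y ≠ 0)
    (hxy : theta τ (x + y) ≠ 0) (h₀ : SpectralGeneric τ γ u v) :
    alpha τ γ u x * alpha τ γ (u + v) (x + y) * beta τ γ v y =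
    beta τ γ v y * alpha τ γ (u + v) x * alpha τ γ u (x + y) := by
  obtain ⟨hu, hv, huv⟩ := h₀
  simp only [alpha, beta]
  field_simp

theorem dybe_abc_bac {τ γ u v x y : ℂ} (hx : theta τ x ≠ 0) (hy : theta τ y ≠ 0)
    (hxy : theta τ (x + y) ≠ 0) (h₀ : SpectralGeneric τ γ u v) :
    beta τ γ u x * alpha τ γ (u + v) y * alpha τ γ v (x + y) =
    alpha τ γ v y * alpha τ γ (u + v) (x + y) * beta τ γ u x := by
  obtain ⟨hu, hv, huv⟩ := h₀
  simp only [alpha, beta]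
  field_simp

theorem dybe_abc_bca {τ γ u v x y : ℂ} (hx : theta τ x ≠ 0) (hy : theta τ y ≠ 0)
    (hxy : theta τ (x + y) ≠ 0) (h₀ : SpectralGeneric τ γ u v) :
    beta τ γ u x * alpha τ γ (u + v) y * beta τ γ v (x + y) =
    beta τ γ v y * beta τ γ (u + v) x * alpha τ γ u y +
      alpha τ γ v y * beta τ γ (u + v) (x + y) * beta τ γ u (-y) := by
  obtain ⟨hu, hv, huv⟩ := h₀
  have e0 : theta τ (v + (x + y)) = theta τ (v + x + y) := congrArg _ (by ring)
  have e1 : theta τ (u + v + (x + y)) = theta τ (u + v + x + y) := congrArg _ (by ring)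
  have e3 : theta τ (u + (-y)) = theta τ (u - y) := congrArg _ (by ring)
  have h : theta τ (u + x) * theta τ (v + x + y) * (theta τ y * theta τ (u + v))
      - theta τ (u + v + x + y) * theta τ x * (theta τ (-v) * theta τ (u - y))
      + theta τ (x + y) * theta τ (u + v + x) * (theta τ u * theta τ (-(v + y))) = 0 :=
    theta_three_term τ (1 / 2 * u + 1 / 2 * v + x + 1 / 2 * y) (1 / 2 * u - 1 / 2 * v - 1 / 2 * y)
      (1 / 2 * u + 1 / 2 * v + 1 / 2 * y) (-1 / 2 * u - 1 / 2 * v + 1 / 2 * y)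
  simp only [theta_neg] at h
  simp only [alpha, beta, e0, e1, theta_neg, e3]
  linear_combination (norm := (field_simp; ring))
    ((theta τ γ * theta τ γ * theta τ (y + γ)) / (theta τ (u - γ) * theta τ x *
      theta τ (u + v - γ) * theta τ y * theta τ y * theta τ (v - γ) * theta τ (x + y))) * h

theorem dybe_abc_cab {τ γ u v x y : ℂ} (hx : theta τ x ≠ 0) (hy : theta τ y ≠ 0)
    (hxy : theta τ (x + y) ≠ 0) (h₀ : SpectralGeneric τ γ u v) :
    alpha τ γ u x * beta τ γ (u + v) (x + y) * beta τ γ v (-x) +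
      beta τ γ u x * beta τ γ (u + v) y * alpha τ γ v x =
    beta τ γ v y * alpha τ γ (u + v) x * beta τ γ u (x + y) := by
  obtain ⟨hu, hv, huv⟩ := h₀
  have e0 : theta τ (u + v + (x + y)) = theta τ (u + v + x + y) := congrArg _ (by ring)
  have e2 : theta τ (v + (-x)) = theta τ (v - x) := congrArg _ (by ring)
  have e3 : theta τ (u + (x + y)) = theta τ (u + x + y) := congrArg _ (by ring)
  have h : theta τ (u + v + x + y) * theta τ y * (theta τ u * theta τ (v - x))
      - theta τ (u + v + y) * theta τ (x + y) * (theta τ (u + x) * theta τ v)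
      + theta τ (u + x + y) * theta τ (v + y) * (theta τ (u + v) * theta τ x) = 0 :=
    theta_three_term τ (1 / 2 * u + 1 / 2 * v + 1 / 2 * x + y) (1 / 2 * u + 1 / 2 * v + 1 / 2 * x)
      (1 / 2 * u + 1 / 2 * v - 1 / 2 * x) (1 / 2 * u - 1 / 2 * v + 1 / 2 * x)
  simp only [alpha, beta, e0, theta_neg, e2, e3]
  linear_combination (norm := (field_simp; ring))
    -((theta τ (x + γ) * theta τ γ * theta τ γ) / (theta τ (u - γ) * theta τ x * theta τ x *
      theta τ (u + v - γ) * theta τ (x + y) * theta τ (v - γ) * theta τ y)) * h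

theorem dybe_abc_cba {τ γ u v x y : ℂ} (hx : theta τ x ≠ 0) (hy : theta τ y ≠ 0)
    (hxy : theta τ (x + y) ≠ 0) (h₀ : SpectralGeneric τ γ u v) :
    alpha τ γ u x * beta τ γ (u + v) (x + y) * alpha τ γ v (-x) +
      beta τ γ u x * beta τ γ (u + v) y * beta τ γ v x =
    beta τ γ v y * beta τ γ (u + v) x * beta τ γ u y +
      alpha τ γ v y * beta τ γ (u + v) (x + y) * alpha τ γ u (-y) := by
  obtain ⟨hu, hv, huv⟩ := h₀
  have e0 : theta τ (u + v + (x + y)) = theta τ (u + v + x + y) := congrArg _ (by ring)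
  have e2 : theta τ (-x + γ) = -theta τ (x - γ) := by
    rw [← theta_neg]; exact congrArg _ (by ring)
  have e4 : theta τ (-y + γ) = -theta τ (y - γ) := by
    rw [← theta_neg]; exact congrArg _ (by ring)
  have h₁ : theta τ (x - γ) * theta τ y * (theta τ (x + γ) * theta τ y)
      - theta τ (x + y) * theta τ (-γ) * (theta τ (x - y) * theta τ (-γ))
      + theta τ x * theta τ (y - γ) * (theta τ x * theta τ (-(y + γ))) = 0 :=
    theta_three_term τ (1 / 2 * x + 1 / 2 * y - 1 / 2 * γ) (1 / 2 * x - 1 / 2 * y - 1 / 2 * γ)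
      (1 / 2 * x + 1 / 2 * y + 1 / 2 * γ) (1 / 2 * x - 1 / 2 * y + 1 / 2 * γ)
  have h₂ : theta τ (u + v + y) * theta τ y * (theta τ (u + x) * theta τ (v + x))
      - theta τ (u + v + x + y) * theta τ (-(x - y)) * (theta τ u * theta τ v)
      + theta τ (u + y) * theta τ (v + y) * (theta τ (u + v + x) * theta τ (-x)) = 0 :=
    theta_three_term τ (1 / 2 * u + 1 / 2 * v + y) (1 / 2 * u + 1 / 2 * v)
      (1 / 2 * u + 1 / 2 * v + x) (1 / 2 * u - 1 / 2 * v)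
  simp only [theta_neg] at h₁ h₂
  simp only [alpha, beta, e0, theta_neg, e2, theta_neg, e4]
  linear_combination (norm := (field_simp; ring))
    -(theta τ u * theta τ (u + v + x + y) * theta τ γ * theta τ v) / (theta τ (u - γ) *
      theta τ x * theta τ x * theta τ (u + v - γ) * theta τ (x + y) * theta τ (v - γ) *
      theta τ y * theta τ y) * h₁ - (theta τ γ * theta τ γ * theta τ γ * theta τ (x + y)) /
      (theta τ (u - γ) * theta τ x * theta τ x * theta τ (u + v - γ) * theta τ (x + y) *
      theta τ (v - γ) * theta τ y * theta τ y) * h₂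

theorem dybe_aab_aab {τ γ u v x : ℂ} (hx : theta τ x ≠ 0) (hxγ : theta τ (x - γ) ≠ 0)
    (h₀ : SpectralGeneric τ γ u v) :
    alpha τ γ (u + v) x * alpha τ γ v (x - γ) =
    alpha τ γ v x * alpha τ γ (u + v) (x - γ) := by
  obtain ⟨hu, hv, huv⟩ := h₀
  have e0 : theta τ (x - γ + γ) = theta τ x := congrArg _ (by ring)
  simp only [alpha, e0]
  field_simp

theorem dybe_aab_aba {τ γ u v x : ℂ} (hx : theta τ x ≠ 0) (hxγ : theta τ (x - γ) ≠ 0)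
    (h₀ : SpectralGeneric τ γ u v) :
    alpha τ γ (u + v) x * beta τ γ v (x - γ) =
    beta τ γ v x * alpha τ γ u x +
      alpha τ γ v x * beta τ γ (u + v) (x - γ) * beta τ γ u (-x) := by
  obtain ⟨hu, hv, huv⟩ := h₀
  have e0 : theta τ (v + (x - γ)) = theta τ (v + x - γ) := congrArg _ (by ring)
  have e1 : theta τ (u + v + (x - γ)) = theta τ (u + v + x - γ) := congrArg _ (by ring)
  have e3 : theta τ (u + (-x)) = theta τ (u - x) := congrArg _ (by ring)
  have h : theta τ (v + x - γ) * theta τ (u + v) * (theta τ (u - γ) * theta τ x)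
      - theta τ (u + v + x - γ) * theta τ v * (theta τ (-γ) * theta τ (-(u - x)))
      + theta τ (u + v - γ) * theta τ (v + x) * (theta τ (x - γ) * theta τ (-u)) = 0 :=
    theta_three_term τ (1 / 2 * u + v + 1 / 2 * x - 1 / 2 * γ)
      (-1 / 2 * u + 1 / 2 * x - 1 / 2 * γ) (1 / 2 * u + 1 / 2 * x - 1 / 2 * γ)
      (1 / 2 * u - 1 / 2 * x - 1 / 2 * γ)
  simp only [theta_neg] at h
  simp only [alpha, beta, e0, e1, theta_neg, e3]
  linear_combination (norm := (field_simp; ring))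
    -((theta τ (x + γ) * theta τ γ) / (theta τ (u + v - γ) * theta τ x * theta τ x *
      theta τ (v - γ) * theta τ (x - γ) * theta τ (u - γ))) * h

theorem dybe_aab_baa {τ γ u v x : ℂ} (hx : theta τ x ≠ 0) (hxγ : theta τ (x - γ) ≠ 0)
    (h₀ : SpectralGeneric τ γ u v) :
    beta τ γ (u + v) x =
    beta τ γ v x * beta τ γ u x +
      alpha τ γ v x * beta τ γ (u + v) (x - γ) * alpha τ γ u (-x) := by
  obtain ⟨hu, hv, huv⟩ := h₀
  have e0 : theta τ (u + v + (x - γ)) = theta τ (u + v + x - γ) := congrArg _ (by ring)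
  have e2 : theta τ (-x + γ) = -theta τ (x - γ) := by
    rw [← theta_neg]; exact congrArg _ (by ring)
  have h : theta τ x * theta τ (v - γ) * (theta τ (u + v + x) * theta τ (u - γ))
      - theta τ (u + v + x - γ) * theta τ (-u) * (theta τ (x + γ) * theta τ (-v))
      + theta τ (v + x) * theta τ (-γ) * (theta τ (u + x) * theta τ (-(u + v - γ))) = 0 :=
    theta_three_term τ (1 / 2 * v + 1 / 2 * x - 1 / 2 * γ) (-1 / 2 * v + 1 / 2 * x + 1 / 2 * γ)
      (u + 1 / 2 * v + 1 / 2 * x - 1 / 2 * γ) (1 / 2 * v + 1 / 2 * x + 1 / 2 * γ)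
  simp only [theta_neg] at h
  simp only [alpha, beta, e0, theta_neg, e2]
  linear_combination (norm := (field_simp; ring))
    -((theta τ γ * theta τ (x - γ)) / (theta τ (u + v - γ) * theta τ x * theta τ x *
      theta τ (v - γ) * theta τ (u - γ) * theta τ (x - γ))) * h

theorem dybe_aba_aab {τ γ u v x : ℂ} (hx : theta τ x ≠ 0) (hxγ : theta τ (x - γ) ≠ 0)
    (h₀ : SpectralGeneric τ γ u v) :
    alpha τ γ u (x - γ) * beta τ γ v (-x + γ) +
      beta τ γ u (x - γ) * beta τ γ (u + v) (-x) * alpha τ γ v (x - γ) =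
    beta τ γ v (-x) * alpha τ γ (u + v) (x - γ) := by
  obtain ⟨hu, hv, huv⟩ := h₀
  have e1 : theta τ (v + (-x)) = theta τ (v - x) := congrArg _ (by ring)
  have e2 : theta τ (x - γ + γ) = theta τ x := congrArg _ (by ring)
  have e3 : theta τ (-x + γ) = -theta τ (x - γ) := by
    rw [← theta_neg]; exact congrArg _ (by ring)
  have e4 : theta τ (v + (-x + γ)) = theta τ (v - x + γ) := congrArg _ (by ring)
  have e5 : theta τ (u + (x - γ)) = theta τ (u + x - γ) := congrArg _ (by ring)
  have e6 : theta τ (u + v + (-x)) = theta τ (u + v - x) := congrArg _ (by ring)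
  have h : theta τ (u + v) * theta τ (u - γ) * (theta τ (x - γ) * theta τ (v - x))
      - theta τ (u + v - γ) * theta τ u * (theta τ x * theta τ (v - x + γ))
      + theta τ (u + x - γ) * theta τ (u + v - x) * (theta τ v * theta τ γ) = 0 :=
    theta_three_term τ (u + 1 / 2 * v - 1 / 2 * γ) (1 / 2 * v + 1 / 2 * γ) (1 / 2 * v - 1 / 2 * γ)
      (-1 / 2 * v + x - 1 / 2 * γ)
  simp only [alpha, beta, theta_neg, e1, e2, e3, e4, e5, e6]
  linear_combination (norm := (field_simp; ring))
    -((theta τ γ * theta τ x) / (theta τ (v - γ) * theta τ x * theta τ (u + v - γ) *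
      theta τ (x - γ) * theta τ (x - γ) * theta τ (u - γ))) * h

theorem dybe_aba_aba {τ γ u v x : ℂ} (hx : theta τ x ≠ 0) (hxγ : theta τ (x - γ) ≠ 0)
    (h₀ : SpectralGeneric τ γ u v) :
    alpha τ γ u (x - γ) * alpha τ γ v (-x + γ) +
      beta τ γ u (x - γ) * beta τ γ (u + v) (-x) * beta τ γ v (x - γ) =
    alpha τ γ v (-x) * alpha τ γ u x +
      beta τ γ v (-x) * beta τ γ (u + v) (x - γ) * beta τ γ u (-x) := by
  obtain ⟨hu, hv, huv⟩ := h₀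
  have e0 : theta τ (x - γ + γ) = theta τ x := congrArg _ (by ring)
  have e1 : theta τ (-x + γ) = -theta τ (x - γ) := by
    rw [← theta_neg]; exact congrArg _ (by ring)
  have e2 : theta τ (-x + γ + γ) = -theta τ (x - 2 * γ) := by
    rw [← theta_neg]; exact congrArg _ (by ring)
  have e4 : theta τ (u + (x - γ)) = theta τ (u + x - γ) := congrArg _ (by ring)
  have e5 : theta τ (u + v + (-x)) = theta τ (u + v - x) := congrArg _ (by ring)
  have e6 : theta τ (v + (x - γ)) = theta τ (v + x - γ) := congrArg _ (by ring)
  have e7 : theta τ (v + (-x)) = theta τ (v - x) := congrArg _ (by ring)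
  have e8 : theta τ (u + v + (x - γ)) = theta τ (u + v + x - γ) := congrArg _ (by ring)
  have e9 : theta τ (u + (-x)) = theta τ (u - x) := congrArg _ (by ring)
  have h₁ : theta τ x * theta τ x * (theta τ x * theta τ (x - 2 * γ))
      - theta τ (2 * x - γ) * theta τ γ * (theta τ γ * theta τ (-γ))
      + theta τ (x + γ) * theta τ (x - γ) * (theta τ (x - γ) * theta τ (-(x - γ))) = 0 :=
    theta_three_term τ x 0 (x - γ) γ
  have h₂ : theta τ (u + v - x) * theta τ (v + x - γ) * (theta τ (u + x - γ) * theta τ x)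
      - theta τ (u + v + x - γ) * theta τ (v - x) * (theta τ (u - x) * theta τ (-(x - γ)))
      + theta τ (u + v - γ) * theta τ v * (theta τ u * theta τ (-(2 * x - γ))) = 0 :=
    theta_three_term τ (1 / 2 * u + v - 1 / 2 * γ) (1 / 2 * u - x + 1 / 2 * γ)
      (1 / 2 * u + x - 1 / 2 * γ) (1 / 2 * u - 1 / 2 * γ)
  simp only [theta_neg] at h₁ h₂
  simp only [alpha, beta, e0, e1, e2, theta_neg, e4, e5, e6, e7, e8, e9]
  linear_combination (norm := (field_simp; ring))
    (theta τ u * theta τ v * theta τ (u + v - γ)) / (theta τ (u - γ) * theta τ (x - γ) *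
      theta τ (x - γ) * theta τ (v - γ) * theta τ x * theta τ x * theta τ (u + v - γ)) * h₁ +
      (theta τ γ * theta τ γ * theta τ γ) / (theta τ (u - γ) * theta τ (x - γ) *
      theta τ (x - γ) * theta τ (v - γ) * theta τ x * theta τ x * theta τ (u + v - γ)) * h₂

theorem dybe_aba_baa {τ γ u v x : ℂ} (hx : theta τ x ≠ 0) (hxγ : theta τ (x - γ) ≠ 0)
    (h₀ : SpectralGeneric τ γ u v) :
    beta τ γ u (x - γ) * alpha τ γ (u + v) (-x) =
    alpha τ γ v (-x) * beta τ γ u x +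
      beta τ γ v (-x) * beta τ γ (u + v) (x - γ) * alpha τ γ u (-x) := by
  obtain ⟨hu, hv, huv⟩ := h₀
  have e1 : theta τ (-x + γ) = -theta τ (x - γ) := by
    rw [← theta_neg]; exact congrArg _ (by ring)
  have e2 : theta τ (u + (x - γ)) = theta τ (u + x - γ) := congrArg _ (by ring)
  have e3 : theta τ (v + (-x)) = theta τ (v - x) := congrArg _ (by ring)
  have e4 : theta τ (u + v + (x - γ)) = theta τ (u + v + x - γ) := congrArg _ (by ring)
  have h : theta τ (x - γ) * theta τ (u + v - γ) * (theta τ (u + x) * theta τ v)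
      - theta τ (u + v + x - γ) * theta τ (-γ) * (theta τ (-(v - x)) * theta τ (-u))
      + theta τ (u + x - γ) * theta τ (v - γ) * (theta τ x * theta τ (-(u + v))) = 0 :=
    theta_three_term τ (1 / 2 * u + 1 / 2 * v + 1 / 2 * x - γ)
      (-1 / 2 * u - 1 / 2 * v + 1 / 2 * x) (1 / 2 * u + 1 / 2 * v + 1 / 2 * x)
      (1 / 2 * u - 1 / 2 * v + 1 / 2 * x)
  simp only [theta_neg] at h
  simp only [alpha, beta, theta_neg, e1, e2, e3, e4]
  linear_combination (norm := (field_simp; ring))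
    ((theta τ (x - γ) * theta τ γ) / (theta τ (v - γ) * theta τ x * theta τ x *
      theta τ (u - γ) * theta τ (x - γ) * theta τ (u + v - γ))) * h

theorem dybe_baa_aab {τ γ u v x : ℂ} (hx : theta τ x ≠ 0) (hxγ : theta τ (x - γ) ≠ 0)
    (h₀ : SpectralGeneric τ γ u v) :
    beta τ γ u (-x + γ) * beta τ γ v (-x + γ) +
      alpha τ γ u (-x + γ) * beta τ γ (u + v) (-x) * alpha τ γ v (x - γ) =
    beta τ γ (u + v) (-x + γ) := by
  obtain ⟨hu, hv, huv⟩ := h₀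
  have e0 : theta τ (-x + γ) = -theta τ (x - γ) := by
    rw [← theta_neg]; exact congrArg _ (by ring)
  have e1 : theta τ (u + v + (-x + γ)) = theta τ (u + v - x + γ) := congrArg _ (by ring)
  have e2 : theta τ (u + (-x + γ)) = theta τ (u - x + γ) := congrArg _ (by ring)
  have e3 : theta τ (v + (-x + γ)) = theta τ (v - x + γ) := congrArg _ (by ring)
  have e4 : theta τ (-x + γ + γ) = -theta τ (x - 2 * γ) := by
    rw [← theta_neg]; exact congrArg _ (by ring)
  have e6 : theta τ (u + v + (-x)) = theta τ (u + v - x) := congrArg _ (by ring)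
  have e7 : theta τ (x - γ + γ) = theta τ x := congrArg _ (by ring)
  have h : theta τ (u + v - x + γ) * theta τ (x - γ) * (theta τ (u - γ) * theta τ (v - γ))
      - theta τ (u + v - γ) * theta τ γ * (theta τ (u - x + γ) * theta τ (v - x + γ))
      + theta τ u * theta τ v * (theta τ (u + v - x) * theta τ (-(x - 2 * γ))) = 0 :=
    theta_three_term τ (1 / 2 * u + 1 / 2 * v) (1 / 2 * u + 1 / 2 * v - x + γ)
      (1 / 2 * u + 1 / 2 * v - γ) (1 / 2 * u - 1 / 2 * v)
  simp only [theta_neg] at h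
  simp only [alpha, beta, e0, e1, e2, e3, e4, theta_neg, e6, e7]
  linear_combination (norm := (field_simp; ring))
    -((theta τ γ * theta τ x) / (theta τ (u + v - γ) * theta τ (x - γ) * theta τ (x - γ) *
      theta τ (u - γ) * theta τ (v - γ) * theta τ x)) * h

theorem dybe_baa_aba {τ γ u v x : ℂ} (hx : theta τ x ≠ 0) (hxγ : theta τ (x - γ) ≠ 0)
    (h₀ : SpectralGeneric τ γ u v) :
    beta τ γ u (-x + γ) * alpha τ γ v (-x + γ) +
      alpha τ γ u (-x + γ) * beta τ γ (u + v) (-x) * beta τ γ v (x - γ) =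
    alpha τ γ (u + v) (-x + γ) * beta τ γ u (-x) := by
  obtain ⟨hu, hv, huv⟩ := h₀
  have e0 : theta τ (-x + γ) = -theta τ (x - γ) := by
    rw [← theta_neg]; exact congrArg _ (by ring)
  have e1 : theta τ (u + (-x + γ)) = theta τ (u - x + γ) := congrArg _ (by ring)
  have e2 : theta τ (-x + γ + γ) = -theta τ (x - 2 * γ) := by
    rw [← theta_neg]; exact congrArg _ (by ring)
  have e4 : theta τ (u + (-x)) = theta τ (u - x) := congrArg _ (by ring)
  have e5 : theta τ (u + v + (-x)) = theta τ (u + v - x) := congrArg _ (by ring)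
  have e6 : theta τ (v + (x - γ)) = theta τ (v + x - γ) := congrArg _ (by ring)
  have h : theta τ v * theta τ (u - x + γ) * (theta τ x * theta τ (u + v - γ))
      - theta τ (u + v) * theta τ (-(x - γ)) * (theta τ (-(u - x)) * theta τ (v - γ))
      + theta τ γ * theta τ (u + v - x) * (theta τ (v + x - γ) * theta τ (-u)) = 0 :=
    theta_three_term τ (1 / 2 * u + 1 / 2 * v - 1 / 2 * x + 1 / 2 * γ)
      (-1 / 2 * u + 1 / 2 * v + 1 / 2 * x - 1 / 2 * γ)
      (1 / 2 * u + 1 / 2 * v + 1 / 2 * x - 1 / 2 * γ)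
      (-1 / 2 * u - 1 / 2 * v + 1 / 2 * x + 1 / 2 * γ)
  simp only [theta_neg] at h
  simp only [alpha, beta, e0, e1, e2, theta_neg, e4, e5, e6]
  linear_combination (norm := (field_simp; ring))
    ((theta τ γ * theta τ (x - 2 * γ)) / (theta τ (u - γ) * theta τ (x - γ) * theta τ (x - γ) *
      theta τ (v - γ) * theta τ (u + v - γ) * theta τ x)) * h

theorem dybe_baa_baa {τ γ u v x : ℂ} (hx : theta τ x ≠ 0) (hxγ : theta τ (x - γ) ≠ 0)
    (h₀ : SpectralGeneric τ γ u v) :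
    alpha τ γ u (-x + γ) * alpha τ γ (u + v) (-x) =
    alpha τ γ (u + v) (-x + γ) * alpha τ γ u (-x) := by
  obtain ⟨hu, hv, huv⟩ := h₀
  have e0 : theta τ (-x + γ) = -theta τ (x - γ) := by
    rw [← theta_neg]; exact congrArg _ (by ring)
  have e1 : theta τ (-x + γ + γ) = -theta τ (x - 2 * γ) := by
    rw [← theta_neg]; exact congrArg _ (by ring)
  simp only [alpha, e0, e1, theta_neg]
  field_simp

/-! ### The dynamical Yang-Baxter equation -/

/-- All `θ(λ_a - λ_b + cγ)` with `|c| ≤ K` are nonzero. -/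
def DynGeneric (τ γ : ℂ) {N : ℕ} (K : ℤ) (lam : Fin N → ℂ) : Prop :=
  ∀ c : ℤ, |c| ≤ K → ∀ a b : Fin N, a ≠ b → theta τ (lam a - lam b + c * γ) ≠ 0

/-- The `(i, j)` coordinate of `R(z,λ) F`, for a vector `F` of `ℂ^N ⊗ ℂ^N`. -/
def rOp (τ γ z : ℂ) {N : ℕ} (lam : Fin N → ℂ) (i j : Fin N) (F : Fin N → Fin N → ℂ) : ℂ :=
  if i = j then F i i
  else alpha τ γ z (lam i - lam j) * F i j + beta τ γ z (lam i - lam j) * F j i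

/-- The dynamical Yang-Baxter equation
`R¹²(u, λ - γh³) R¹³(u+v, λ) R²³(v, λ - γh¹) = R²³(v, λ) R¹³(u+v, λ - γh²) R¹²(u, λ)`
in coordinates. The cases are the coincidence patterns of the row index `(i, j, k)`. -/
theorem dybe {τ γ u v : ℂ} (h₀ : SpectralGeneric τ γ u v) {N : ℕ} {lam : Fin N → ℂ}
    (hlam : DynGeneric τ γ 1 lam) (i j k : Fin N) (F : Fin N → Fin N → Fin N → ℂ) :
    rOp τ γ u (shift1 γ lam k) i j (fun p q => rOp τ γ (u + v) lam p k fun a r =>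
      rOp τ γ v (shift1 γ lam a) q r fun b c => F a b c) =
    rOp τ γ v lam j k (fun q r => rOp τ γ (u + v) (shift1 γ lam q) i r fun p c =>
      rOp τ γ u lam p q fun a b => F a b c) := by
  have hθ (a b : Fin N) (h : a ≠ b) : theta τ (lam a - lam b) ≠ 0 := by
    simpa using hlam 0 (by simp) a b h
  have hθγ (a b : Fin N) (h : a ≠ b) : theta τ (lam a - lam b - γ) ≠ 0 := by
    simpa [sub_eq_add_neg] using hlam (-1) (by simp) a b h
  by_cases hij : i = j
  · subst hij
    by_cases hik : i = k
    · subst hik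
      simp [rOp]
    · have hki := Ne.symm hik
      have e₁ : lam i - γ - lam k = lam i - lam k - γ := by ring
      have e₂ : lam k - lam i = -(lam i - lam k) := by ring
      simp only [rOp, shift1, hik, hki, if_true, if_false, sub_zero, e₁, e₂]
      linear_combination
        F i i k * dybe_aab_aab (hθ i k hik) (hθγ i k hik) h₀ +
        F i k i * dybe_aab_aba (hθ i k hik) (hθγ i k hik) h₀ +
        F k i i * dybe_aab_baa (hθ i k hik) (hθγ i k hik) h₀
  by_cases hjk : j = k
  · subst hjk
    have hji := Ne.symm hij
    have e₁ : lam j - γ - lam i = lam j - lam i - γ := by ring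
    have e₂ : lam i - lam j = -(lam j - lam i) := by ring
    have e₃ : lam i - (lam j - γ) = -(lam j - lam i) + γ := by ring
    simp only [rOp, shift1, hij, hji, if_true, if_false, sub_zero, e₁, e₂, e₃]
    linear_combination
      F i j j * dybe_baa_baa (hθ j i hji) (hθγ j i hji) h₀ +
      F j i j * dybe_baa_aba (hθ j i hji) (hθγ j i hji) h₀ +
      F j j i * dybe_baa_aab (hθ j i hji) (hθγ j i hji) h₀
  have hji := Ne.symm hij
  have hkj := Ne.symm hjk
  by_cases hik : i = k
  · subst hik
    have e₁ : lam i - γ - lam j = lam i - lam j - γ := by ring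
    have e₂ : lam j - lam i = -(lam i - lam j) := by ring
    have e₃ : lam j - (lam i - γ) = -(lam i - lam j) + γ := by ring
    simp only [rOp, shift1, hij, hji, if_true, if_false, sub_zero, e₁, e₂, e₃]
    linear_combination
      F i i j * dybe_aba_aab (hθ i j hij) (hθγ i j hij) h₀ +
      F i j i * dybe_aba_aba (hθ i j hij) (hθγ i j hij) h₀ +
      F j i i * dybe_aba_baa (hθ i j hij) (hθγ i j hij) h₀
  have hki := Ne.symm hik
  have hy := hθ j k hjk
  have hxy : theta τ (lam i - lam j + (lam j - lam k)) ≠ 0 := by simpa using hθ i k hik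
  have e₁ : lam i - lam k = lam i - lam j + (lam j - lam k) := by ring
  have e₂ : lam j - lam i = -(lam i - lam j) := by ring
  have e₃ : lam k - lam j = -(lam j - lam k) := by ring
  simp only [rOp, shift1, hij, hji, hjk, hkj, hik, hki, if_false, sub_zero, e₁, e₂, e₃]
  linear_combination
    F i k j * dybe_abc_acb (hθ i j hij) hy hxy h₀ +
    F j i k * dybe_abc_bac (hθ i j hij) hy hxy h₀ +
    F j k i * dybe_abc_bca (hθ i j hij) hy hxy h₀ +
    F k i j * dybe_abc_cab (hθ i j hij) hy hxy h₀ +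
    F k j i * dybe_abc_cba (hθ i j hij) hy hxy h₀

/-! ### The exchange relation -/

theorem rOp_linear {τ γ z : ℂ} {N : ℕ} {lam : Fin N → ℂ} (s t : ℂ) (F G : Fin N → Fin N → ℂ)
    (i j : Fin N) :
    rOp τ γ z lam i j (fun p q => s * F p q + t * G p q) =
      s * rOp τ γ z lam i j F + t * rOp τ γ z lam i j G := by
  unfold rOp
  split_ifs <;> ring

/-- The operator `L(z,λ)` on `ℂ^N ⊗ W` in coordinates, defined by recursion on the number of tensor
factors of `W`: the last factor is split off by `Fin.snoc`, and the product of the others is taken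
at `λ` shifted by the last index of the output. -/
def LOp (τ γ : ℂ) {N : ℕ} : (n : ℕ) → ℂ → (Fin N → ℂ) →
    (Fin N → (Fin n → Fin N) → ℂ) → Fin N → (Fin n → Fin N) → ℂ
  | 0, _, _, G => G
  | n + 1, z, lam, G => fun i f =>
      LOp τ γ n z (shift1 γ lam (f (Fin.last n)))
        (fun k f' => rOp τ γ (z - γ * n) lam k (f (Fin.last n)) fun j b => G j (Fin.snoc f' b))
        i (Fin.init f)

theorem LOp_linear {τ γ z : ℂ} {N n : ℕ} {lam : Fin N → ℂ} (s t : ℂ)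
    (F G : Fin N → (Fin n → Fin N) → ℂ) (i : Fin N) (f : Fin n → Fin N) :
    LOp τ γ n z lam (fun j g => s * F j g + t * G j g) i f =
      s * LOp τ γ n z lam F i f + t * LOp τ γ n z lam G i f := by
  induction n generalizing lam i with
  | zero => rfl
  | succ n ih => simp only [LOp, rOp_linear, ih]

theorem shift1_comm (γ : ℂ) {N : ℕ} (lam : Fin N → ℂ) (a b : Fin N) :
    shift1 γ (shift1 γ lam a) b = shift1 γ (shift1 γ lam b) a := by
  funext i
  simp only [shift1]
  ring

/-- `R` acting on the auxiliary space and the last factor of `W` commutes with an `L` acting on a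
second auxiliary space and the remaining factors. It exchanges the two shifts of `λ`, whose order
is immaterial. -/
theorem rOp_LOp_comm {τ γ z w : ℂ} {N n : ℕ} {lam : Fin N → ℂ}
    (H : Fin N → Fin N → Fin N → (Fin n → Fin N) → ℂ) (m a q : Fin N) (f : Fin n → Fin N) :
    rOp τ γ z lam m a (fun k b => LOp τ γ n w (shift1 γ (shift1 γ lam k) b) (H k b) q f) =
      LOp τ γ n w (shift1 γ (shift1 γ lam a) m)
        (fun r g => rOp τ γ z lam m a fun k b => H k b r g) q f := by
  unfold rOp
  split_ifs with h
  · rw [h]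
  · beta_reduce
    rw [shift1_comm γ lam m a, ← LOp_linear]

theorem card_filter_castSucc {n : ℕ} (P : Fin (n + 1) → Prop) [DecidablePred P] :
    (Finset.univ.filter P).card =
      (Finset.univ.filter fun j : Fin n => P j.castSucc).card + if P (Fin.last n) then 1 else 0 := by
  simp only [Finset.card_filter, Fin.sum_univ_castSucc]

theorem wtc_succ {n N : ℕ} (f : Fin (n + 1) → Fin N) (a : Fin N) :
    wtc f a = wtc (Fin.init f) a + if a = f (Fin.last n) then 1 else 0 := by
  simp only [wtc, card_filter_castSucc, Fin.init, eq_comm (a := a)]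
  congr!

theorem DynGeneric.shift1 {τ γ : ℂ} {N : ℕ} {K : ℤ} {lam : Fin N → ℂ}
    (h : DynGeneric τ γ (K + 1) lam) (i : Fin N) : DynGeneric τ γ K (shift1 γ lam i) := by
  intro c hc a b hab
  obtain ⟨e, he, hval⟩ : ∃ e : ℤ, |e| ≤ 1 ∧
      Ruijsenaars.shift1 γ lam i a - Ruijsenaars.shift1 γ lam i b = lam a - lam b + e * γ := by
    by_cases ha : a = i
    · refine ⟨-1, by simp, ?_⟩
      have hb : b ≠ i := fun hb => hab (ha.trans hb.symm)
      simp only [Ruijsenaars.shift1, ha, hb, if_true, if_false]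
      push_cast
      ring
    · by_cases hb : b = i
      · refine ⟨1, by simp, ?_⟩
        simp only [Ruijsenaars.shift1, ha, hb, if_true, if_false]
        push_cast
        ring
      · exact ⟨0, by simp, by simp [Ruijsenaars.shift1, ha, hb]⟩
  rw [hval]
  have := h (e + c) ((abs_add_le e c).trans (by omega)) a b hab
  rwa [show lam a - lam b + ((e + c : ℤ) : ℂ) * γ = lam a - lam b + e * γ + c * γ by
    push_cast; ring] at this

theorem DynGeneric.mono {τ γ : ℂ} {N : ℕ} {K K' : ℤ} {lam : Fin N → ℂ}
    (h : DynGeneric τ γ K lam) (hK : K' ≤ K) : DynGeneric τ γ K' lam :=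
  fun c hc => h c (hc.trans hK)

/-- The dynamical exchange relation
`R(z-w, λ - γ wt) L¹(z, λ) L²(w, λ - γh¹) = L²(w, λ) L¹(z, λ - γh²) R(z-w, λ)` in coordinates,
where `wt` is the weight in `W` of the output vector `f`. -/
theorem rll {τ γ z w : ℂ} {N n : ℕ} {lam : Fin N → ℂ}
    (h₀ : ∀ m : ℕ, m < n → SpectralGeneric τ γ (z - w) (w - γ * m))
    (hlam : DynGeneric τ γ n lam) (F : Fin N → Fin N → (Fin n → Fin N) → ℂ)
    (i j : Fin N) (f : Fin n → Fin N) :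
    rOp τ γ (z - w) (fun a => lam a - γ * wtc f a) i j (fun p q =>
        LOp τ γ n z lam (fun k f' => LOp τ γ n w (shift1 γ lam k) (F k) q f') p f) =
      LOp τ γ n w lam (fun q f' => LOp τ γ n z (shift1 γ lam q)
        (fun p g => rOp τ γ (z - w) lam p q fun k l => F k l g) i f') j f := by
  induction n generalizing lam i j with
  | zero => simp [LOp, wtc]
  | succ n ih =>
    have hwt : (fun a => lam a - γ * wtc f a) =
        fun a => shift1 γ lam (f (Fin.last n)) a - γ * wtc (Fin.init f) a := by
      funext a
      rw [wtc_succ, shift1]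
      split_ifs <;> push_cast <;> ring
    have hzw : z - γ * n = z - w + (w - γ * n) := by ring
    have hlam' : DynGeneric τ γ n (shift1 γ lam (f (Fin.last n))) :=
      DynGeneric.shift1 (by exact_mod_cast hlam) _
    have h1 : DynGeneric τ γ 1 lam := hlam.mono (by push_cast; omega)
    -- with the last factor isolated, the induction hypothesis moves `R(z-w)` past the first `n`
    -- factors and `dybe` moves it past the last one, where the spectral parameters are
    -- `z - γ n = (z - w) + (w - γ n)` and `w - γ n`
    simp only [LOp, Fin.snoc_last, Fin.init_snoc, rOp_LOp_comm, hwt]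
    rw [ih (fun m hm => h₀ m (by omega)) hlam']
    simp only [hzw, dybe (h₀ n (by omega)) h1]

/-- The weight of the basis vector `e_i ⊗ f` of `ℂ^N ⊗ W`, with integer entries so that it can be
subtracted. -/
def totalWt {N n : ℕ} (i : Fin N) (f : Fin n → Fin N) : Fin N → ℤ :=
  fun a => wtc f a + if a = i then 1 else 0

/-- `L` preserves the total weight: it maps vectors supported in weight `μ` to such vectors. -/
theorem LOp_eq_zero {τ γ z : ℂ} {N n : ℕ} {lam : Fin N → ℂ} (μ : Fin N → ℤ)
    (G : Fin N → (Fin n → Fin N) → ℂ) (hG : ∀ j g, totalWt j g ≠ μ → G j g = 0)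
    (i : Fin N) (f : Fin n → Fin N) (hf : totalWt i f ≠ μ) : LOp τ γ n z lam G i f = 0 := by
  induction n generalizing lam i μ with
  | zero => exact hG i f hf
  | succ n ih =>
    set b := f (Fin.last n) with hb
    have hsnoc (k c : Fin N) (g : Fin n → Fin N) :
        totalWt k (Fin.snoc g c : Fin (n + 1) → Fin N) =
          fun a => totalWt k g a + if a = c then 1 else 0 := by
      funext a
      simp only [totalWt, wtc_succ, Fin.init_snoc, Fin.snoc_last]
      push_cast
      ring
    refine ih (fun a => μ a - if a = b then 1 else 0) _ (fun k g hkg => ?_) _ _ fun h => hf ?_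
    · have h₁ : totalWt k (Fin.snoc g b : Fin (n + 1) → Fin N) ≠ μ := by
        rintro rfl
        exact hkg (by simp [hsnoc])
      have h₂ : totalWt b (Fin.snoc g k : Fin (n + 1) → Fin N) ≠ μ := by
        rintro rfl
        refine hkg (funext fun a => ?_)
        rw [hsnoc]
        simp only [totalWt]
        ring
      unfold rOp
      split_ifs with hkb
      · rw [hkb] at h₁ ⊢
        exact hG _ _ h₁
      · beta_reduce
        rw [hG _ _ h₁, hG _ _ h₂]
        ring
    · rw [← Fin.snoc_init_self f, ← hb, hsnoc, h]
      simp

/-! ### Comparison with the matrix definitions -/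

theorem rOp_eq_sum (τ γ z : ℂ) {N : ℕ} (lam : Fin N → ℂ) (i j : Fin N)
    (F : Fin N → Fin N → ℂ) :
    rOp τ γ z lam i j F = ∑ p, ∑ q, Rm τ γ z lam (i, j) (p, q) * F p q := by
  unfold rOp Rm
  by_cases h : i = j
  · subst h
    simp only [if_true]
    rw [Finset.sum_eq_single i, Finset.sum_eq_single i]
    · simp
    · intro b _ hb
      simp [hb.symm]
    · simp
    · intro p _ hp
      refine Finset.sum_eq_zero fun q _ => ?_
      have : ¬ (i = q ∧ i = p) := fun h => hp h.2.symm
      simp [hp.symm]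
    · simp
  · have key (p q : Fin N) : (if (i, j) = (p, q) then
        (if i = j then 1 else alpha τ γ z (lam i - lam j))
        else if i = q ∧ j = p then beta τ γ z (lam i - lam j) else 0) * F p q =
        (if i = p then if j = q then alpha τ γ z (lam i - lam j) * F p q else 0 else 0) +
        (if j = p then if i = q then beta τ γ z (lam i - lam j) * F p q else 0 else 0) := by
      simp only [Prod.mk.injEq]
      split_ifs <;> simp_all
    rw [if_neg h]
    dsimp only
    simp_rw [key]
    simp only [Finset.sum_add_distrib, Finset.sum_ite_irrel, Finset.sum_const_zero,
      Finset.sum_ite_eq, Finset.mem_univ, if_true]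

theorem R0k_mulVec (τ γ z : ℂ) {N n : ℕ} (lam : Fin N → ℂ) (k : Fin n)
    (G : Fin N × (Fin n → Fin N) → ℂ) (i : Fin N) (f : Fin n → Fin N) :
    (R0k τ γ z lam k).mulVec G (i, f) =
      rOp τ γ z (fun a => lam a -
          γ * (((Finset.univ.filter (fun j => k < j ∧ f j = a)).card : ℕ) : ℂ)) i (f k)
        fun p b => G (p, Function.update f k b) := by
  rw [rOp_eq_sum, Matrix.mulVec, dotProduct, Fintype.sum_prod_type]
  refine Finset.sum_congr rfl fun p _ => ?_
  symm
  refine Finset.sum_of_injOn (fun b => Function.update f k b)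
    (Function.update_injective f k).injOn (by simp) ?_ ?_
  · intro g _ hg
    have : ¬ ∀ j, j ≠ k → f j = g j := by
      intro h
      refine hg ⟨g k, by simp, ?_⟩
      funext j
      by_cases hj : j = k
      · subst hj; simp
      · simp [hj, h j hj]
    simp only [R0k, this, if_false, zero_mul]
  · intro b _
    have h₁ : ∀ j, j ≠ k → f j = Function.update f k b j := fun j hj => by simp [hj]
    have h₂ (a : Fin N) (j : Fin n) : k < j ∧ Function.update f k b j = a ↔ k < j ∧ f j = a :=
      and_congr_right fun hj => by rw [← h₁ j hj.ne']
    simp only [R0k]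
    rw [if_pos h₁]
    simp only [h₂, Function.update_self]

/-- Operators acting on the first `n` of `n + 1` factors of `W` leave the last index fixed, and
act as their counterparts for `n` factors at `λ` shifted by that index. -/
theorem prod_R0k_mulVec (τ γ z : ℂ) {N n : ℕ} (lam : Fin N → ℂ) (l : List (Fin n))
    (G : Fin N × (Fin (n + 1) → Fin N) → ℂ) (i : Fin N) (f : Fin (n + 1) → Fin N) :
    ((l.map fun k => R0k τ γ (z - γ * (k.1 : ℂ)) lam k.castSucc).prod).mulVec G (i, f) =
      ((l.map fun k => R0k τ γ (z - γ * (k.1 : ℂ)) (shift1 γ lam (f (Fin.last n))) k).prod).mulVec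
        (fun q => G (q.1, Fin.snoc q.2 (f (Fin.last n)))) (i, Fin.init f) := by
  induction l generalizing i f with
  | nil => simp [Fin.snoc_init_self]
  | cons k l ih =>
    simp only [List.map_cons, List.prod_cons, ← Matrix.mulVec_mulVec, R0k_mulVec, ih]
    have hlast : ∀ b, Function.update f k.castSucc b (Fin.last n) = f (Fin.last n) := fun b =>
      Function.update_of_ne (Fin.castSucc_lt_last k).ne' _ _
    simp only [hlast, Fin.init_update_castSucc]
    congr 1
    funext a
    simp only [shift1, card_filter_castSucc, Fin.castSucc_lt_castSucc_iff,
      Fin.castSucc_lt_last, true_and, Fin.init, eq_comm (a := a)]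
    split_ifs <;> push_cast <;> ring_nf <;> congr!

theorem Lop_mulVec (τ γ z : ℂ) {N n : ℕ} (lam : Fin N → ℂ)
    (G : Fin N → (Fin n → Fin N) → ℂ) (i : Fin N) (f : Fin n → Fin N) :
    (Lop τ γ n z lam).mulVec (fun q => G q.1 q.2) (i, f) = LOp τ γ n z lam G i f := by
  induction n generalizing lam i with
  | zero => simp [Lop, LOp]
  | succ n ih =>
    have hL : Lop τ γ (n + 1) z lam =
        ((List.finRange n).map fun k => R0k τ γ (z - γ * (k.1 : ℂ)) lam k.castSucc).prod *
          R0k τ γ (z - γ * (n : ℂ)) lam (Fin.last n) := by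
      simp [Lop, List.finRange_succ_last, Function.comp_def]
    rw [hL, ← Matrix.mulVec_mulVec, prod_R0k_mulVec, LOp]
    beta_reduce
    rw [← ih]
    simp only [Lop, R0k_mulVec]
    congr 1
    funext q
    have hup (p b : Fin N) : (Function.update (Fin.snoc q.2 p : Fin (n + 1) → Fin N)
        (Fin.last n) b) = Fin.snoc q.2 b :=
      Fin.update_snoc_last ..
    simp [Fin.not_lt.2 (Fin.le_last _), hup]

theorem LOp_eq_sum (τ γ z : ℂ) {N n : ℕ} (lam : Fin N → ℂ)
    (G : Fin N → (Fin n → Fin N) → ℂ) (i : Fin N) (f : Fin n → Fin N) :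
    LOp τ γ n z lam G i f = ∑ k, ∑ g, Lent τ γ n i k z lam f g * G k g := by
  rw [← Lop_mulVec, Matrix.mulVec, dotProduct, Fintype.sum_prod_type]
  rfl

theorem Lent_diag_eq_zero {τ γ z : ℂ} {N n : ℕ} {lam : Fin N → ℂ} {f g : Fin n → Fin N}
    (h : wtc f ≠ wtc g) (i : Fin N) : Lent τ γ n i i z lam f g = 0 := by
  have key := LOp_eq_sum τ γ z lam (fun k g' => if k = i then if g' = g then 1 else 0 else 0) i f
  simp only [mul_ite, mul_one, mul_zero, Finset.sum_ite_irrel, Finset.sum_const_zero,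
    Finset.sum_ite_eq', Finset.mem_univ, if_true] at key
  rw [← key]
  refine LOp_eq_zero (totalWt i g) _ (fun k g' hne => ?_) i f fun he => h (funext fun a => ?_)
  · split_ifs with hk hg
    · exact absurd (by rw [hk, hg]) hne
    · rfl
    · rfl
  · simpa [totalWt] using congrFun he a

/-! ### Commuting traces -/

/-- Unitarity `R(z,λ) R²¹(-z,λ) = 1` in coordinates. -/
theorem rOp_inverse {τ γ z : ℂ} (h₁ : theta τ (z - γ) ≠ 0) (h₂ : theta τ (z + γ) ≠ 0)
    {N : ℕ} {lam : Fin N → ℂ} (hlam : DynGeneric τ γ 0 lam) (i j : Fin N)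
    (F : Fin N → Fin N → ℂ) :
    rOp τ γ z lam i j (fun p q => rOp τ γ (-z) lam q p fun r s => F s r) = F i j := by
  by_cases hij : i = j
  · simp [rOp, hij]
  have hx : theta τ (lam i - lam j) ≠ 0 := by simpa using hlam 0 (by simp) i j hij
  have e₁ : lam j - lam i = -(lam i - lam j) := by ring
  simp only [rOp, hij, Ne.symm hij, if_false, e₁]
  generalize lam i - lam j = x at hx
  have t₁ : theta τ (-z - γ) = -theta τ (z + γ) := by rw [← theta_neg]; congr 1; ring
  have t₂ : theta τ (-x + γ) = -theta τ (x - γ) := by rw [← theta_neg]; congr 1; ring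
  have t₃ : theta τ (-z + x) = -theta τ (z - x) := by rw [← theta_neg]; congr 1; ring
  have t₄ : theta τ (-z + -x) = -theta τ (z + x) := by rw [← theta_neg]; congr 1; ring
  simp only [alpha, beta, t₁, t₂, t₃, t₄, theta_neg]
  field_simp
  have key := theta_three_term τ z γ x 0 (p₁ := z + γ) (p₂ := z - γ) (p₃ := x) (p₄ := x)
    (q₁ := z + x) (q₂ := z - x) (q₃ := γ) (q₄ := γ) (r₁ := z) (r₂ := z) (r₃ := x + γ)
    (r₄ := -(x - γ))
  rw [theta_neg] at key
  linear_combination -F i j * key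

theorem Rm_inverse {τ γ z : ℂ} (h₁ : theta τ (z - γ) ≠ 0) (h₂ : theta τ (z + γ) ≠ 0)
    {N : ℕ} {lam : Fin N → ℂ} (hlam : DynGeneric τ γ 0 lam) :
    Rm τ γ z lam * (Rm τ γ (-z) lam).submatrix Prod.swap Prod.swap = 1 := by
  ext ⟨i, j⟩ ⟨k, l⟩
  have key := rOp_inverse h₁ h₂ hlam i j fun p q => if p = k then if q = l then 1 else 0 else 0
  simp only [rOp_eq_sum, mul_ite, mul_one, mul_zero, Finset.sum_ite_eq', Finset.mem_univ,
    if_true] at key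
  rw [Matrix.mul_apply, Fintype.sum_prod_type, Matrix.one_apply]
  simp only [Matrix.submatrix_apply, Prod.swap, Prod.mk.injEq, ite_and]
  exact key

/-- The matrix on `ℂ^N ⊗ ℂ^N` formed by the kernels from `g` to `f` of the operators
`L_{ik}(z,λ) L_{jl}(w, λ - γω_k)` on `W`, in row `(i, j)` and column `(k, l)`. -/
def kerA (τ γ z w : ℂ) {N n : ℕ} (lam : Fin N → ℂ) (f g : Fin n → Fin N) :
    Matrix (Fin N × Fin N) (Fin N × Fin N) ℂ := fun p q =>
  ∑ f', Lent τ γ n p.1 q.1 z lam f f' * Lent τ γ n p.2 q.2 w (shift1 γ lam q.1) f' g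

/-- The analogue of `kerA` for the opposite order `L_{jl}(w,λ) L_{ik}(z, λ - γω_l)`. -/
def kerB (τ γ z w : ℂ) {N n : ℕ} (lam : Fin N → ℂ) (f g : Fin n → Fin N) :
    Matrix (Fin N × Fin N) (Fin N × Fin N) ℂ := fun p q =>
  ∑ f', Lent τ γ n p.2 q.2 w lam f f' * Lent τ γ n p.1 q.1 z (shift1 γ lam q.2) f' g

/-- The exchange relation `rll` evaluated on basis vectors. -/
theorem Rm_kerA {τ γ z w : ℂ} {N n : ℕ} {lam : Fin N → ℂ}
    (h₀ : ∀ m : ℕ, m < n → SpectralGeneric τ γ (z - w) (w - γ * m))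
    (hlam : DynGeneric τ γ n lam) (f g : Fin n → Fin N) :
    Rm τ γ (z - w) (fun a => lam a - γ * wtc f a) * kerA τ γ z w lam f g =
      kerB τ γ z w lam f g * Rm τ γ (z - w) lam := by
  ext ⟨i, j⟩ ⟨k, l⟩
  have key := rll h₀ hlam
    (fun k' l' g' => if k' = k then if l' = l then if g' = g then 1 else 0 else 0 else 0) i j f
  simp only [rOp_eq_sum, LOp_eq_sum, mul_ite, mul_one, mul_zero, Finset.sum_ite_irrel,
    Finset.sum_const_zero, Finset.sum_ite_eq', Finset.mem_univ, if_true] at key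
  rw [Matrix.mul_apply, Matrix.mul_apply, Fintype.sum_prod_type, Fintype.sum_prod_type]
  simp only [kerA, kerB]
  refine key.trans ((Finset.sum_congr rfl fun q _ => ?_).trans Finset.sum_comm)
  simp only [Finset.sum_mul, Finset.mul_sum, mul_assoc]
  exact Finset.sum_comm

/-- `R` only mixes `e_i ⊗ e_j` with `e_j ⊗ e_i`, so it commutes with symmetric diagonal matrices. -/
theorem Rm_mul_diagonal (τ γ z : ℂ) {N : ℕ} (lam : Fin N → ℂ) (d : Fin N × Fin N → ℂ)
    (hd : ∀ p, d p.swap = d p) :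
    Rm τ γ z lam * Matrix.diagonal d = Matrix.diagonal d * Rm τ γ z lam := by
  ext ⟨i, j⟩ ⟨k, l⟩
  rw [Matrix.mul_diagonal, Matrix.diagonal_mul, mul_comm]
  unfold Rm
  split_ifs with h₁ h₂ h₃
  · rw [h₁]
  · rw [h₁]
  · obtain ⟨rfl, rfl⟩ := h₃
    rw [← hd]
    rfl
  · simp

theorem trace_kerA {τ γ z w : ℂ} {N n : ℕ} {lam : Fin N → ℂ}
    (h₀ : ∀ m : ℕ, m < n → SpectralGeneric τ γ (z - w) (w - γ * m))
    (h₁ : theta τ (z - w - γ) ≠ 0) (h₂ : theta τ (z - w + γ) ≠ 0)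
    (hlam : DynGeneric τ γ n lam) {f g : Fin n → Fin N} {ℓ : ℕ} (hf : ∀ a, wtc f a = ℓ)
    (d : Fin N × Fin N → ℂ) (hd : ∀ p, d p.swap = d p) :
    (kerA τ γ z w lam f g * Matrix.diagonal d).trace =
      (kerB τ γ z w lam f g * Matrix.diagonal d).trace := by
  -- the shift `γ wt f` is by the same `γ ℓ` in every coordinate
  have hR : Rm τ γ (z - w) (fun a => lam a - γ * wtc f a) = Rm τ γ (z - w) lam := by
    funext p q
    simp only [Rm, hf, sub_sub_sub_cancel_right]
  have hinv := Rm_inverse h₁ h₂ (hlam.mono (Int.natCast_nonneg n))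
  have hRA := Rm_kerA h₀ hlam f g
  rw [hR] at hRA
  have hD := Rm_mul_diagonal τ γ (z - w) lam d hd
  set R := Rm τ γ (z - w) lam
  set S := (Rm τ γ (-(z - w)) lam).submatrix Prod.swap Prod.swap
  set A := kerA τ γ z w lam f g
  set B := kerB τ γ z w lam f g
  set D := Matrix.diagonal d
  calc (A * D).trace = (S * R * A * D).trace := by
        rw [mul_eq_one_comm.1 hinv, Matrix.one_mul]
    _ = (S * (B * D * R)).trace := by
        rw [Matrix.mul_assoc S, hRA, Matrix.mul_assoc, Matrix.mul_assoc, Matrix.mul_assoc, hD]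
    _ = (B * D).trace := by
        rw [Matrix.trace_mul_comm, Matrix.mul_assoc, hinv, Matrix.mul_one]

theorem Transfer_Transfer (τ γ z w : ℂ) {N n : ℕ}
    (ψ : (Fin N → ℂ) → (Fin n → Fin N) → ℂ) (lam : Fin N → ℂ) (f : Fin n → Fin N) :
    Transfer τ γ n z (Transfer τ γ n w ψ) lam f =
      ∑ g, ∑ i, ∑ j, (∑ f', Lent τ γ n i i z lam f f' *
        Lent τ γ n j j w (shift1 γ lam i) f' g) * ψ (shift1 γ (shift1 γ lam i) j) g := by
  simp only [Transfer, Lax, Finset.mul_sum, Finset.sum_mul, mul_assoc]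
  refine .trans (Finset.sum_congr rfl fun i _ => ?_) Finset.sum_comm
  refine Finset.sum_comm.trans (.trans (Finset.sum_congr rfl fun j _ => ?_) Finset.sum_comm)
  exact Finset.sum_comm

/-- the transfer matrices of `S^{Nℓ}V(0)` commute for different
values of the spectral parameter, `𝒯(z)𝒯(w) = 𝒯(w)𝒯(z)`, as operators on
`W[0]`-valued functions of `λ` (`N = M+2`, `n = Nℓ`), written pointwise at a
generic point `λ`. -/
theorem statement7 (τ γ : ℂ) (hτ : 0 < τ.im) (M ℓ : ℕ) (hℓ : 1 ≤ ℓ)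
    (z w : ℂ)
    (ψ : (Fin (M + 2) → ℂ) → (Fin ((M + 2) * ℓ) → Fin (M + 2)) → ℂ)
    (hψ : ∀ l f, ¬ (∀ a, wtc f a = ℓ) → ψ l f = 0)
    (lam : Fin (M + 2) → ℂ)
    (hlam : ∀ c : ℤ, |c| ≤ 3 * ((M + 2) * ℓ + 2) →
      ∀ a b : Fin (M + 2), a ≠ b → theta τ (lam a - lam b + c * γ) ≠ 0)
    (hz : ∀ c : ℤ, 1 ≤ c → c ≤ (M + 2) * ℓ + 2 →
      theta τ (z - c * γ) ≠ 0 ∧ theta τ (w - c * γ) ≠ 0 ∧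
      theta τ (z - w - c * γ) ≠ 0 ∧ theta τ (z - w + c * γ) ≠ 0) :
    ∀ f, Transfer τ γ ((M + 2) * ℓ) z (Transfer τ γ ((M + 2) * ℓ) w ψ) lam f
      = Transfer τ γ ((M + 2) * ℓ) w (Transfer τ γ ((M + 2) * ℓ) z ψ) lam f := by
  intro f
  have hpos : (0 : ℤ) ≤ (M + 2) * ℓ := by positivity
  obtain ⟨-, -, h₁, h₂⟩ := hz 1 le_rfl (by omega)
  simp only [Int.cast_one, one_mul] at h₁ h₂
  have h₀ (m : ℕ) (hm : m < (M + 2) * ℓ) : SpectralGeneric τ γ (z - w) (w - γ * m) := by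
    have hm' : (m : ℤ) < (M + 2) * ℓ := by exact_mod_cast hm
    obtain ⟨hz₁, hw₁, -, -⟩ := hz (m + 1) (by omega) (by omega)
    refine ⟨h₁, ?_, ?_⟩
    · convert hw₁ using 2
      push_cast
      ring
    · convert hz₁ using 2
      push_cast
      ring
  have hgen : DynGeneric τ γ ((M + 2) * ℓ : ℕ) lam := fun c hc => hlam c (by
    push_cast at hc
    linarith)
  rw [Transfer_Transfer, Transfer_Transfer]
  refine Finset.sum_congr rfl fun g _ => ?_
  by_cases hg : ∀ a, wtc g a = ℓ
  swap
  · simp [hψ _ g hg]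
  by_cases hfg : wtc f = wtc g
  · have key := trace_kerA h₀ h₁ h₂ hgen (g := g) (fun a => (congrFun hfg a).trans (hg a))
      (fun p => ψ (shift1 γ (shift1 γ lam p.2) p.1) g) fun p => by
        simp [shift1_comm γ lam p.1 p.2]
    simp only [Matrix.trace, Matrix.diag, Matrix.mul_diagonal, Fintype.sum_prod_type, kerA,
      kerB] at key
    simp_rw [shift1_comm γ lam] at key ⊢
    rw [key, Finset.sum_comm]
    refine Finset.sum_congr rfl fun i _ => Finset.sum_congr rfl fun j _ => ?_
    rw [shift1_comm γ lam i j]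
  · have hzero (u v : ℂ) (i j : Fin (M + 2)) (l₁ l₂ : Fin (M + 2) → ℂ)
        (f' : Fin ((M + 2) * ℓ) → Fin (M + 2)) :
        Lent τ γ _ i i u l₁ f f' * Lent τ γ _ j j v l₂ f' g = 0 := by
      by_cases h : wtc f = wtc f'
      · rw [Lent_diag_eq_zero (fun h' => hfg (h.trans h')) j, mul_zero]
      · rw [Lent_diag_eq_zero h i, zero_mul]
    simp only [hzero, Finset.sum_const_zero, zero_mul]
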